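/- Kontsevich's vanishing lemmas: (1) For every pair of distinct points z₁, z₂ in the open upper half-plane ℍ⁺, the integral ∫_{z ∈ ℍ⁺ ∖ {z₁,z₂}} dφ(z₁,z) ∧ dφ(z,z₂) equals 0. (2) For every z₁ ∈ ℍ⁺ and z₂ ∈ ℝ = ∂ℍ⁺, the integral ∫_{z ∈ ℍ⁺ ∖ {z₁}} dφ(z₁,z) ∧ dφ(z,z₂) equals 0. (3) For every z₀ ∈ ℍ⁺, the integral ∫_{z ∈ ℍ⁺ ∖ {z₀}} dφ(z₀,z) ∧ dφ(z,z₀) equals 0. -/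

import Mathlib

open scoped Classical

noncomputable section

open MeasureTheory

/-- Kontsevich's hyperbolic angle function
`φ(z,w) = (1/2π) arg((z−w)/(z̄−w))` on the closed upper half-plane. -/
def hyperbolicAngle (z w : ℂ) : ℝ :=
  (1 / (2 * Real.pi)) * Complex.arg ((z - w) / ((starRingEnd ℂ) z - w))

/-- The coefficient of the 2-form `df ∧ dg` on `ℂ ≅ ℝ²` with respect to the standard
area form `dx ∧ dy`, namely `(∂f/∂x)(∂g/∂y) − (∂f/∂y)(∂g/∂x)`; integrating it over a
region is integrating the 2-form `df ∧ dg`. -/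
def wedgeCoeff (f g : ℂ → ℝ) (z : ℂ) : ℝ :=
  fderiv ℝ f z 1 * fderiv ℝ g z Complex.I - fderiv ℝ f z Complex.I * fderiv ℝ g z 1

/-!
Off a null set `dφ(z₁,z)` is `(1/2π) (d arg(z - z₁) - d arg(z - z̄₁))` and `dφ(z,z₂)` is
`(1/2π) (d arg(z - z₂) + d arg(z - z̄₂))`, so the coefficient of their wedge product is
`(1/2π)² (K z₁ z₂ - K z̄₁ z̄₂ + K z₁ z̄₂ - K z̄₁ z₂)`, where `K p q` is the coefficient of
`d arg(z - p) ∧ d arg(z - q)`. Since `K p q (z̄) = -K p̄ q̄ (z)`, its integral over the half-plane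
is that of `(1/2π)² (K z₁ z₂ + K z₁ z̄₂)` over all of `ℂ`. Each `K p q` is integrable over `ℂ`,
and the reflection in the line through `p` and `q` changes its sign, so its integral is zero.
-/

open scoped ComplexConjugate

theorem ae_re_ne (c : ℝ) : ∀ᵐ z : ℂ, z.re ≠ c :=
  (Measure.quasiMeasurePreserving_fst.comp
    Complex.volume_preserving_equiv_real_prod.quasiMeasurePreserving).ae (Measure.ae_ne volume c)

theorem ae_im_ne (c : ℝ) : ∀ᵐ z : ℂ, z.im ≠ c :=
  (Measure.quasiMeasurePreserving_snd.comp
    Complex.volume_preserving_equiv_real_prod.quasiMeasurePreserving).ae (Measure.ae_ne volume c)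

theorem measurableSet_im_pos : MeasurableSet {z : ℂ | 0 < z.im} :=
  measurableSet_lt measurable_const Complex.measurable_im

theorem integral_eq_zero_of_comp_eq_neg {α F : Type*} [MeasurableSpace α] {μ : Measure α}
    [NormedAddCommGroup F] [NormedSpace ℝ F] {e : α → α} (he : MeasurePreserving e μ μ)
    (he' : MeasurableEmbedding e) {f : α → F} (hf : ∀ x, f (e x) = -f x) :
    ∫ x, f x ∂μ = 0 := by
  have : IsAddTorsionFree F := .of_isTorsionFree ℝ F
  simp_rw [← self_eq_neg, ← integral_neg, ← hf, he.integral_comp he']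

theorem setIntegral_im_pos_add_comp_conj {F : Type*} [NormedAddCommGroup F] [NormedSpace ℝ F]
    {f : ℂ → F} (hf : Integrable f) :
    ∫ z in {z : ℂ | 0 < z.im}, (f z + f (conj z)) = ∫ z, f z := by
  have conj_preserving := Complex.conjLIE.measurePreserving
  have conj_embedding := Complex.conjLIE.toHomeomorph.measurableEmbedding
  have hf_conj : Integrable fun z => f (conj z) :=
    (conj_preserving.integrable_comp_emb conj_embedding).2 hf
  have compl_ae_eq : ({z : ℂ | 0 < z.im}ᶜ : Set ℂ) =ᵐ[volume] {z : ℂ | z.im < 0} := by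
    filter_upwards [ae_im_ne 0] with z hz
    exact propext (not_lt.trans hz.le_iff_lt)
  have conj_side : ∫ z in {z : ℂ | 0 < z.im}, f (conj z) = ∫ z in {z : ℂ | 0 < z.im}ᶜ, f z := by
    rw [setIntegral_congr_set compl_ae_eq,
      ← conj_preserving.setIntegral_preimage_emb conj_embedding]
    simp
  rw [integral_add hf.integrableOn hf_conj.integrableOn, conj_side,
    integral_add_compl measurableSet_im_pos hf]

theorem integrable_inv_norm_pow_mul_one_add_norm_sq {E : Type*} [NormedAddCommGroup E]
    [NormedSpace ℝ E] [FiniteDimensional ℝ E] [Nontrivial E] [MeasurableSpace E] [BorelSpace E]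
    (μ : Measure E) [μ.IsAddHaarMeasure] :
    Integrable (fun x : E => (‖x‖ ^ (Module.finrank ℝ E - 1) * (1 + ‖x‖ ^ 2))⁻¹) μ := by
  refine (integrable_fun_norm_addHaar μ
    (f := fun r : ℝ => (r ^ (Module.finrank ℝ E - 1) * (1 + r ^ 2))⁻¹)).2 ?_
  refine integrable_inv_one_add_sq.integrableOn.congr_fun (fun r hr => ?_) measurableSet_Ioi
  have hr' : r ^ (Module.finrank ℝ E - 1) ≠ 0 := pow_ne_zero _ (ne_of_gt hr)
  rw [smul_eq_mul, mul_inv, mul_inv_cancel_left₀ hr']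

theorem div_mul_sq_le_mul_inv_mul_one_add_sq {s t c : ℝ} (hs : 0 ≤ s) (hc : 0 ≤ c) (hst : s ≤ t)
    (hcst : c ≤ s + t) : c / (s * t ^ 2) ≤ (c + 4 / c) * (s * (1 + s ^ 2))⁻¹ := by
  rcases hs.eq_or_lt with rfl | hs
  · simp
  rcases hc.eq_or_lt with rfl | hc
  · simp
  have ht : 0 < t := hs.trans_le hst
  have s_sq_le : s ^ 2 ≤ t ^ 2 := by gcongr
  have c_sq_le : c ^ 2 ≤ (2 * t) ^ 2 := by gcongr; linarith
  rw [← div_eq_mul_inv, div_le_div_iff₀ (by positivity) (by positivity)]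
  calc c * (s * (1 + s ^ 2)) = s / c * (c ^ 2 * s ^ 2 + c ^ 2) := by field_simp; ring
    _ ≤ s / c * (c ^ 2 * t ^ 2 + (2 * t) ^ 2) := by gcongr
    _ = (c + 4 / c) * (s * t ^ 2) := by field_simp; ring

/-- The coefficient of the 2-form `d arg(z - p) ∧ d arg(z - q)` with respect to `dx ∧ dy`. It
takes the junk value `0` at the singular points `p` and `q`. -/
def argKernel (p q z : ℂ) : ℝ :=
  ((z - p) * conj (z - q))⁻¹.im

namespace argKernel

theorem self_eq_zero (p z : ℂ) : argKernel p p z = 0 := by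
  rw [argKernel, Complex.mul_conj, ← Complex.ofReal_inv, Complex.ofReal_im]

theorem swap (p q z : ℂ) : argKernel q p z = -argKernel p q z := by
  rw [argKernel, argKernel, ← Complex.conj_im]
  simp [mul_comm]

theorem apply_conj (p q z : ℂ) : argKernel p q (conj z) = -argKernel (conj p) (conj q) z := by
  rw [argKernel, argKernel, ← Complex.conj_im]
  simp

theorem apply_add_right (p q z : ℂ) : argKernel p q (z + q) = argKernel (p - q) 0 z := by
  rw [argKernel, argKernel, add_sub_cancel_right, sub_zero, sub_sub_eq_add_sub]

theorem measurable (p q : ℂ) : Measurable (argKernel p q) := by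
  have : Measurable fun z : ℂ => conj (z - q) :=
    Complex.continuous_conj.measurable.comp (by fun_prop)
  exact Complex.measurable_im.comp (((measurable_id.sub_const p).mul this).inv)

-- `1/((z-p)(z̄-q̄)) - 1/|z-q|² = (p-q)/((z-p)|z-q|²)`, and the subtracted term is real.
theorem abs_le_div (p q z : ℂ) : |argKernel p q z| ≤ ‖p - q‖ / (‖z - p‖ * ‖z - q‖ ^ 2) := by
  rcases eq_or_ne (z - p) 0 with hp | hp
  · simp [argKernel, hp]
  rcases eq_or_ne (z - q) 0 with hq | hq
  · simp [argKernel, hq]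
  have hq' : conj (z - q) ≠ 0 := (map_ne_zero _).2 hq
  have sub_eq : ((z - p) * conj (z - q))⁻¹ - ((z - q) * conj (z - q))⁻¹ =
      (p - q) / ((z - p) * ((z - q) * conj (z - q))) := by
    field_simp
    ring
  calc |argKernel p q z| = |argKernel p q z - argKernel q q z| := by rw [self_eq_zero, sub_zero]
    _ = |((p - q) / ((z - p) * ((z - q) * conj (z - q)))).im| := by
      rw [argKernel, argKernel, ← Complex.sub_im, sub_eq]
    _ ≤ ‖(p - q) / ((z - p) * ((z - q) * conj (z - q)))‖ := Complex.abs_im_le_norm _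
    _ = ‖p - q‖ / (‖z - p‖ * ‖z - q‖ ^ 2) := by simp only [norm_div, norm_mul, RCLike.norm_conj, sq]

theorem abs_le_of_norm_sub_le {p q z : ℂ} (h : ‖z - p‖ ≤ ‖z - q‖) :
    |argKernel p q z| ≤
      (‖p - q‖ + 4 / ‖p - q‖) * (‖z - p‖ * (1 + ‖z - p‖ ^ 2))⁻¹ := by
  refine (abs_le_div p q z).trans (div_mul_sq_le_mul_inv_mul_one_add_sq (norm_nonneg _)
    (norm_nonneg _) h ?_)
  rw [norm_sub_rev z p]
  exact norm_sub_le_norm_sub_add_norm_sub p z q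

theorem abs_le_add (p q z : ℂ) :
    |argKernel p q z| ≤ (‖p - q‖ + 4 / ‖p - q‖) *
      ((‖z - p‖ * (1 + ‖z - p‖ ^ 2))⁻¹ + (‖z - q‖ * (1 + ‖z - q‖ ^ 2))⁻¹) := by
  rw [mul_add]
  rcases le_total ‖z - p‖ ‖z - q‖ with h | h
  · exact le_add_of_le_of_nonneg (abs_le_of_norm_sub_le h) (by positivity)
  · rw [← abs_neg, ← swap, norm_sub_rev p q]
    exact le_add_of_nonneg_of_le (by positivity) (abs_le_of_norm_sub_le h)

theorem integrable (p q : ℂ) : Integrable (argKernel p q) := by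
  have radial : Integrable fun z : ℂ => (‖z‖ * (1 + ‖z‖ ^ 2))⁻¹ := by
    simpa [Complex.finrank_real_complex] using
      integrable_inv_norm_pow_mul_one_add_norm_sq (volume : Measure ℂ)
  exact (((radial.comp_sub_right p).add (radial.comp_sub_right q)).const_mul _).mono'
    (measurable p q).aestronglyMeasurable (.of_forall (abs_le_add p q))

theorem zero_right_apply_reflection {a : ℂ} (ha : a ≠ 0) (z : ℂ) :
    argKernel a 0 (a / conj a * conj z) = -argKernel a 0 z := by
  have ha' : conj a ≠ 0 := (map_ne_zero _).2 ha
  rw [argKernel, argKernel, ← Complex.conj_im, map_inv₀]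
  congr 2
  simp only [map_sub, map_mul, map_div₀, Complex.conj_conj, sub_zero]
  field_simp

theorem integral_zero_right (a : ℂ) : ∫ z, argKernel a 0 z = 0 := by
  rcases eq_or_ne a 0 with rfl | ha
  · simp [self_eq_zero]
  let reflection : ℂ ≃ₗᵢ[ℝ] ℂ :=
    Complex.conjLIE.trans (rotation (Circle.ofConjDivSelf (conj a) ((map_ne_zero _).2 ha)))
  refine integral_eq_zero_of_comp_eq_neg reflection.measurePreserving
    reflection.toHomeomorph.measurableEmbedding fun z => ?_
  have reflection_apply : reflection z = a / conj a * conj z := by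
    simp [reflection]
  rw [reflection_apply, zero_right_apply_reflection ha]

theorem integral_eq_zero (p q : ℂ) : ∫ z, argKernel p q z = 0 := by
  rw [← integral_add_right_eq_self _ q]
  simp only [apply_add_right, integral_zero_right]

theorem integrable_sub_conj (p q : ℂ) :
    Integrable fun z => argKernel p q z - argKernel (conj p) (conj q) z :=
  (integrable p q).sub (integrable _ _)

theorem setIntegral_im_pos_sub_conj (p q : ℂ) :
    ∫ z in {z : ℂ | 0 < z.im}, (argKernel p q z - argKernel (conj p) (conj q) z) = 0 := by
  simpa only [apply_conj, ← sub_eq_add_neg, integral_eq_zero] using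
    setIntegral_im_pos_add_comp_conj (integrable p q)

end argKernel

/-- The real 1-form `Im (a dz)` on `ℂ`, as the real-linear functional `v ↦ Im (a v)`. -/
def imMulCLM (a : ℂ) : ℂ →L[ℝ] ℝ :=
  Complex.imCLM ∘L ContinuousLinearMap.mul ℝ ℂ a

theorem imMulCLM_apply (a v : ℂ) : imMulCLM a v = (a * v).im :=
  rfl

theorem hasFDerivAt_arg_comp {f : ℂ → ℂ} {f' z : ℂ} (hf : HasDerivAt f f' z)
    (hz : f z ∈ Complex.slitPlane) :
    HasFDerivAt (fun w => Complex.arg (f w)) (imMulCLM (f' / f z)) z := by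
  simp only [← Complex.log_im]
  refine (Complex.imCLM.hasFDerivAt.comp z (hf.clog hz).complexToReal_fderiv).congr_fderiv ?_
  ext v
  simp [imMulCLM_apply]

theorem wedgeCoeff_of_hasFDerivAt {f g : ℂ → ℝ} {c d : ℝ} {a b z : ℂ}
    (hf : HasFDerivAt f (c • imMulCLM a) z) (hg : HasFDerivAt g (d • imMulCLM b) z) :
    wedgeCoeff f g z = c * d * (a * conj b).im := by
  rw [wedgeCoeff, hf.fderiv, hg.fderiv]
  simp only [smul_apply, imMulCLM_apply, mul_one, smul_eq_mul, Complex.mul_im, Complex.I_im,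
    Complex.I_re, mul_zero, add_zero, Complex.conj_im, mul_neg, Complex.conj_re]
  ring

theorem arg_div_conj (a b : ℂ) : Complex.arg (a / conj b) = Complex.arg (a * b) := by
  rcases eq_or_ne b 0 with rfl | hb
  · simp
  have hpos : 0 < (Complex.normSq b)⁻¹ := inv_pos.2 (Complex.normSq_pos.2 hb)
  rw [← Complex.arg_real_mul (a * b) hpos, div_eq_mul_inv, Complex.inv_def, Complex.conj_conj,
    Complex.normSq_conj]
  congr 1
  ring

theorem hyperbolicAngle_eq_arg_mul (z w : ℂ) :
    hyperbolicAngle z w = 1 / (2 * Real.pi) * Complex.arg ((z - w) * (z - conj w)) := by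
  rw [hyperbolicAngle, ← arg_div_conj, map_sub, Complex.conj_conj]

theorem sub_ne_zero_of_re_ne {z w : ℂ} (h : z.re ≠ w.re) : z - w ≠ 0 :=
  sub_ne_zero.2 (ne_of_apply_ne Complex.re h)

theorem sub_div_conj_sub_mem_slitPlane {w z : ℂ} (hre : z.re ≠ w.re) :
    (w - z) / (conj w - z) ∈ Complex.slitPlane := by
  have hconj : conj w - z ≠ 0 := sub_ne_zero_of_re_ne hre.symm
  rcases eq_or_ne w.im 0 with him | him
  · rw [Complex.conj_eq_iff_im.2 him] at hconj ⊢
    rw [div_self hconj]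
    exact Complex.one_mem_slitPlane
  have im_eq : ((w - z) / (conj w - z)).im =
      2 * w.im * (w.re - z.re) / Complex.normSq (conj w - z) := by
    simp only [Complex.div_im, Complex.sub_im, Complex.sub_re, Complex.conj_re, Complex.conj_im]
    ring
  refine Complex.mem_slitPlane_iff.2 (.inr ?_)
  rw [im_eq]
  exact div_ne_zero (mul_ne_zero (mul_ne_zero two_ne_zero him) (sub_ne_zero.2 hre.symm))
    (Complex.normSq_pos.2 hconj).ne'

theorem sub_mul_sub_conj_mem_slitPlane {w z : ℂ} (hz : z.im ≠ 0) (hre : z.re ≠ w.re) :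
    (z - w) * (z - conj w) ∈ Complex.slitPlane := by
  have im_eq : ((z - w) * (z - conj w)).im = 2 * z.im * (z.re - w.re) := by
    simp only [Complex.mul_im, Complex.sub_im, Complex.sub_re, Complex.conj_re, Complex.conj_im]
    ring
  refine Complex.mem_slitPlane_iff.2 (.inr ?_)
  rw [im_eq]
  exact mul_ne_zero (mul_ne_zero two_ne_zero hz) (sub_ne_zero.2 hre)

theorem hasFDerivAt_hyperbolicAngle_right {w z : ℂ} (hre : z.re ≠ w.re) :
    HasFDerivAt (fun z => hyperbolicAngle w z)
      ((1 / (2 * Real.pi)) • imMulCLM ((z - w)⁻¹ - (z - conj w)⁻¹)) z := by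
  have hw : w - z ≠ 0 := sub_ne_zero_of_re_ne hre.symm
  have hw' : conj w - z ≠ 0 := sub_ne_zero_of_re_ne hre.symm
  have hderiv := ((hasDerivAt_id z).const_sub w).div ((hasDerivAt_id z).const_sub (conj w)) hw'
  have hform := (hasFDerivAt_arg_comp hderiv (sub_div_conj_sub_mem_slitPlane hre)).const_mul
    (1 / (2 * Real.pi))
  refine hform.congr_fderiv (congrArg (fun a => (1 / (2 * Real.pi)) • imMulCLM a) ?_)
  rw [← neg_sub w z, ← neg_sub (conj w) z]
  simp only [id, Pi.div_apply]
  field_simp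

theorem hasFDerivAt_hyperbolicAngle_left {w z : ℂ} (hz : z.im ≠ 0) (hre : z.re ≠ w.re) :
    HasFDerivAt (fun z => hyperbolicAngle z w)
      ((1 / (2 * Real.pi)) • imMulCLM ((z - w)⁻¹ + (z - conj w)⁻¹)) z := by
  have hw : z - w ≠ 0 := sub_ne_zero_of_re_ne hre
  have hw' : z - conj w ≠ 0 := sub_ne_zero_of_re_ne hre
  simp only [hyperbolicAngle_eq_arg_mul]
  have hderiv := ((hasDerivAt_id z).sub_const w).mul ((hasDerivAt_id z).sub_const (conj w))
  have hform := (hasFDerivAt_arg_comp hderiv (sub_mul_sub_conj_mem_slitPlane hz hre)).const_mul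
    (1 / (2 * Real.pi))
  refine hform.congr_fderiv (congrArg (fun a => (1 / (2 * Real.pi)) • imMulCLM a) ?_)
  simp only [id, Pi.mul_apply]
  field_simp

theorem wedgeCoeff_hyperbolicAngle {z₁ z₂ z : ℂ} (hz : z.im ≠ 0) (hre₁ : z.re ≠ z₁.re)
    (hre₂ : z.re ≠ z₂.re) :
    wedgeCoeff (fun z => hyperbolicAngle z₁ z) (fun z => hyperbolicAngle z z₂) z =
      (1 / (2 * Real.pi)) ^ 2 *
        ((argKernel z₁ z₂ z - argKernel (conj z₁) (conj z₂) z) +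
          (argKernel z₁ (conj z₂) z - argKernel (conj z₁) z₂ z)) := by
  rw [wedgeCoeff_of_hasFDerivAt (hasFDerivAt_hyperbolicAngle_right hre₁)
    (hasFDerivAt_hyperbolicAngle_left hz hre₂), ← sq]
  simp only [argKernel, ← Complex.sub_im, ← Complex.add_im]
  congr 2
  simp only [mul_inv, map_add, map_sub, map_inv₀, Complex.conj_conj]
  ring

theorem wedgeCoeff_hyperbolicAngle_ae_eq (z₁ z₂ : ℂ) :
    wedgeCoeff (fun z => hyperbolicAngle z₁ z) (fun z => hyperbolicAngle z z₂)
      =ᵐ[volume.restrict {z | 0 < z.im}] fun z => (1 / (2 * Real.pi)) ^ 2 *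
        ((argKernel z₁ z₂ z - argKernel (conj z₁) (conj z₂) z) +
          (argKernel z₁ (conj z₂) z - argKernel (conj z₁) z₂ z)) := by
  refine (ae_restrict_iff' measurableSet_im_pos).2 ?_
  filter_upwards [ae_re_ne z₁.re, ae_re_ne z₂.re] with z hre₁ hre₂ (hz : 0 < z.im)
  exact wedgeCoeff_hyperbolicAngle hz.ne' hre₁ hre₂

theorem kontsevich_vanishing_lemmas_general (z₁ z₂ : ℂ) {s : Set ℂ} (hs : volume s = 0) :
    IntegrableOn (wedgeCoeff (fun z => hyperbolicAngle z₁ z) (fun z => hyperbolicAngle z z₂))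
      ({z : ℂ | 0 < z.im} \ s) ∧
    ∫ z in {z : ℂ | 0 < z.im} \ s,
      wedgeCoeff (fun z => hyperbolicAngle z₁ z) (fun z => hyperbolicAngle z z₂) z = 0 := by
  have hint₁ := argKernel.integrable_sub_conj z₁ z₂
  have hint₂ := argKernel.integrable_sub_conj z₁ (conj z₂)
  have hzero₁ := argKernel.setIntegral_im_pos_sub_conj z₁ z₂
  have hzero₂ := argKernel.setIntegral_im_pos_sub_conj z₁ (conj z₂)
  rw [Complex.conj_conj] at hint₂ hzero₂
  have hwedge := wedgeCoeff_hyperbolicAngle_ae_eq z₁ z₂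
  constructor
  · have hint := (hint₁.add hint₂).const_mul ((1 / (2 * Real.pi)) ^ 2)
    exact (hint.integrableOn.congr_fun_ae hwedge.symm).mono_set Set.sdiff_subset
  · rw [setIntegral_congr_set (sdiff_null_ae_eq_self hs), integral_congr_ae hwedge,
      integral_const_mul, integral_add hint₁.integrableOn hint₂.integrableOn, hzero₁, hzero₂,
      add_zero, mul_zero]

/-- **Kontsevich's vanishing lemmas.**
(1) For distinct `z₁, z₂` in the open upper half-plane `ℍ⁺`,
    `∫_{z ∈ ℍ⁺ ∖ {z₁,z₂}} dφ(z₁,z) ∧ dφ(z,z₂) = 0`.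
(2) For `z₁ ∈ ℍ⁺` and `z₂ ∈ ℝ = ∂ℍ⁺`,
    `∫_{z ∈ ℍ⁺ ∖ {z₁}} dφ(z₁,z) ∧ dφ(z,z₂) = 0`.
(3) For `z₀ ∈ ℍ⁺`, `∫_{z ∈ ℍ⁺ ∖ {z₀}} dφ(z₀,z) ∧ dφ(z,z₀) = 0`. -/
theorem kontsevich_vanishing_lemmas :
    (∀ z₁ z₂ : ℂ, 0 < z₁.im → 0 < z₂.im → z₁ ≠ z₂ →
      ∫ z in {z : ℂ | 0 < z.im} \ {z₁, z₂},
        wedgeCoeff (fun z => hyperbolicAngle z₁ z) (fun z => hyperbolicAngle z z₂) z = 0) ∧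
    (∀ z₁ z₂ : ℂ, 0 < z₁.im → z₂.im = 0 →
      ∫ z in {z : ℂ | 0 < z.im} \ {z₁},
        wedgeCoeff (fun z => hyperbolicAngle z₁ z) (fun z => hyperbolicAngle z z₂) z = 0) ∧
    (∀ z₀ : ℂ, 0 < z₀.im →
      ∫ z in {z : ℂ | 0 < z.im} \ {z₀},
        wedgeCoeff (fun z => hyperbolicAngle z₀ z) (fun z => hyperbolicAngle z z₀) z = 0) := by
  have vanishing (z₁ z₂ : ℂ) {s : Set ℂ} (hs : s.Finite) :=
    (kontsevich_vanishing_lemmas_general z₁ z₂ (hs.measure_zero volume)).2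
  exact ⟨fun z₁ z₂ _ _ _ => vanishing z₁ z₂ (Set.toFinite _),
    fun z₁ z₂ _ _ => vanishing z₁ z₂ (Set.toFinite _),
    fun z₀ _ => vanishing z₀ z₀ (Set.toFinite _)⟩
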